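/- (Gauvin–Dubeau, Fiacco) Suppose the feasible-set map X(·) of NLP is nonempty-valued and uniformly compact near p (i.e. the union of X(q) over q in some neighborhood of p is bounded), and suppose MFCQ holds at every x ∈ Σ(p). Then the value function φ is locally Lipschitz near p, and for every direction h ∈ ℝ^ℓ: inf_{x ∈ Σ(p)} min_{(y,z) ∈ M_p(x)} ∇_p L(x,y,z,p)ᵀ h ≤ liminf_{t↓0} (φ(p+th) − φ(p))/t ≤ limsup_{t↓0} (φ(p+th) − φ(p))/t ≤ inf_{x ∈ Σ(p)} max_{(y,z) ∈ M_p(x)} ∇_p L(x,y,z,p)ᵀ h. -/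

import Mathlib

/-!
The whole theorem rests on one stability fact, `feasible_step`: if `(d, k)` is a direction at a
feasible point `(x, p)` along which the linearised equality constraints vanish, the active
inequality constraints strictly decrease and the objective has slope less than `c`, then every
feasible point `x'` of every nearby problem `q` can be moved to a feasible point of the problem
`q + t • k`, raising the objective by at most `c * t`. The point `x' + t • d` is nearly feasible,
and a quantitative open mapping theorem (`local_surj`, from the linear independence in MFCQ) repairs
the equality constraints. The uniformity in the base point `(x', q)` comes from strict
differentiability (`strict_step`).

Such directions are produced by `direction_or_multiplier`, which is linear programming duality: if
no suitable `d` exists at level `c`, then some Lagrange multiplier satisfies `∇_p L · k ≥ c`. Its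
proof (`lp_alternative`) separates a point from an open convex set, MFCQ ensuring that the weight of
the objective in the separating functional does not vanish.

For the upper bound, `feasible_step` moves one solution at `p` along `k`, for every level above the
largest `∇_p L · k` (`eventually_slope_le`). For the lower bound it moves the solutions at
`p + t • k` back to `p` along `-k` (`eventually_le_slope`). Since these solutions depend on `t`, this
needs compactness: solutions of nearby problems cluster only at solutions at `p`
(`eventually_solSet`). Lipschitz continuity is the case `k = 0` with the MFCQ direction, using that
`feasible_step` tolerates an error in the target parameter proportional to `t`. Finally, uniform
boundedness of the multipliers (`multiplier_bound`) makes the infima, suprema, `liminf` and `limsup`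
in the statement genuine.
-/

open Filter Topology Set Matrix

attribute [local instance] Classical.propDecidable

namespace SensNLP

variable {n l me mi : ℕ}
variable (f : (Fin n → ℝ) → (Fin l → ℝ) → ℝ)
  (g : (Fin n → ℝ) → (Fin l → ℝ) → Fin me → ℝ)
  (h : (Fin n → ℝ) → (Fin l → ℝ) → Fin mi → ℝ)
  (p : Fin l → ℝ) (x : Fin n → ℝ) (y : Fin me → ℝ) (z : Fin mi → ℝ)
  (hdir : Fin l → ℝ)

/-- The Lagrangian `L(x,y,z,p) = f(x,p) + yᵀ g(x,p) + zᵀ h(x,p)`. -/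
noncomputable def Lag : ℝ :=
  f x p + ∑ i, y i * g x p i + ∑ j, z j * h x p j

/-- The gradient (with respect to `x`) of a scalar function, as a vector. -/
noncomputable def gradx (φ : (Fin n → ℝ) → ℝ) (x : Fin n → ℝ) : Fin n → ℝ :=
  fun j => fderiv ℝ φ x (Pi.single j 1)

/-- The quadratic form `dᵀ ∇²φ(x) d` of the Hessian of a scalar function. -/
noncomputable def hessQ (φ : (Fin n → ℝ) → ℝ) (x d : Fin n → ℝ) : ℝ :=
  fderiv ℝ (fun x' => fderiv ℝ φ x' d) x d

/-- KKT conditions: stationarity of the Lagrangian in `x`, primal feasibility,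
dual feasibility and complementarity. -/
def IsKKT : Prop :=
  fderiv ℝ (fun x' => Lag f g h p x' y z) x = 0 ∧
  g x p = 0 ∧ h x p ≤ 0 ∧ 0 ≤ z ∧ ∑ j, z j * h x p j = 0

/-- The multiplier set `M_p(x)`. -/
def MultSet : Set ((Fin me → ℝ) × (Fin mi → ℝ)) :=
  {yz | IsKKT f g h p x yz.1 yz.2}

/-- LICQ: linear independence of the gradients of equality and active inequality
constraints. -/
def LICQ : Prop :=
  LinearIndependent ℝ
    (fun i : Fin me ⊕ {j : Fin mi // h x p j = 0} =>
      Sum.elim (fun i => gradx (fun x' => g x' p i) x)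
        (fun j => gradx (fun x' => h x' p j.1) x) i)

/-- MFCQ. -/
def MFCQ : Prop :=
  LinearIndependent ℝ (fun i : Fin me => gradx (fun x' => g x' p i) x) ∧
  ∃ d : Fin n → ℝ,
    (∀ i, fderiv ℝ (fun x' => g x' p i) x d = 0) ∧
    (∀ j, h x p j = 0 → fderiv ℝ (fun x' => h x' p j) x d < 0)

/-- SMFCQ (relative to a multiplier `z`). -/
def SMFCQ : Prop :=
  LinearIndependent ℝ
    (fun i : Fin me ⊕ {j : Fin mi // h x p j = 0 ∧ 0 < z j} =>
      Sum.elim (fun i => gradx (fun x' => g x' p i) x)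
        (fun j => gradx (fun x' => h x' p j.1) x) i) ∧
  ∃ d : Fin n → ℝ,
    (∀ i, fderiv ℝ (fun x' => g x' p i) x d = 0) ∧
    (∀ j, h x p j = 0 → 0 < z j → fderiv ℝ (fun x' => h x' p j) x d = 0) ∧
    (∀ j, h x p j = 0 → z j = 0 → fderiv ℝ (fun x' => h x' p j) x d < 0)

/-- CRCQ at `x` (for parameter `p`): every subfamily of gradients of equality
constraints and active inequality constraints has constant rank near `x`. -/
def CRCQ : Prop :=
  ∃ W ∈ 𝓝 x, ∀ (J : Finset (Fin me)) (I : Finset (Fin mi)),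
    (∀ i ∈ I, h x p i = 0) →
    ∃ r : ℕ, ∀ x' ∈ W,
      Module.finrank ℝ ↥(Submodule.span ℝ
        ((fun i => gradx (fun x'' => g x'' p i) x') '' ↑J ∪
         (fun i => gradx (fun x'' => h x'' p i) x') '' ↑I)) = r

/-- The critical cone `C_p(x)`. -/
def criticalCone : Set (Fin n → ℝ) :=
  {d | fderiv ℝ (fun x' => f x' p) x d ≤ 0 ∧
       (∀ i, fderiv ℝ (fun x' => g x' p i) x d = 0) ∧
       (∀ j, h x p j = 0 → fderiv ℝ (fun x' => h x' p j) x d ≤ 0)}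

/-- The set `D_p(x;z)` used in the strong second-order sufficiency condition. -/
def Dset : Set (Fin n → ℝ) :=
  {d | (∀ i, fderiv ℝ (fun x' => g x' p i) x d = 0) ∧
       (∀ j, h x p j = 0 → 0 < z j → fderiv ℝ (fun x' => h x' p j) x d = 0)}

/-- SOSC. -/
def SOSC : Prop :=
  ∃ yz ∈ MultSet f g h p x, ∀ d ∈ criticalCone f g h p x, d ≠ 0 →
    0 < hessQ (fun x' => Lag f g h p x' yz.1 yz.2) x d

/-- SSOSC. -/
def SSOSC : Prop :=
  ∃ yz ∈ MultSet f g h p x, ∀ d ∈ Dset g h p x yz.2, d ≠ 0 →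
    0 < hessQ (fun x' => Lag f g h p x' yz.1 yz.2) x d

/-- GSSOSC. -/
def GSSOSC : Prop :=
  ∀ yz ∈ MultSet f g h p x, ∀ d ∈ Dset g h p x yz.2, d ≠ 0 →
    0 < hessQ (fun x' => Lag f g h p x' yz.1 yz.2) x d

/-- Strict complementarity slackness: no weakly active constraint. -/
def SCS : Prop :=
  ∀ j, h x p j = 0 → z j ≠ 0

/-- `x` is a local solution (local minimizer) of NLP(p). -/
def IsLocalSol : Prop :=
  g x p = 0 ∧ h x p ≤ 0 ∧
  ∃ W ∈ 𝓝 x, ∀ x' ∈ W, g x' p = 0 → h x' p ≤ 0 → f x p ≤ f x' p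

/-- The directional critical set `K_p(x,z;h)`. -/
def Kset : Set (Fin n → ℝ) :=
  {d | (∀ i, fderiv ℝ (fun x' => g x' p i) x d
          + fderiv ℝ (fun p' => g x p' i) p hdir = 0) ∧
       (∀ j, h x p j = 0 → 0 < z j →
          fderiv ℝ (fun x' => h x' p j) x d
          + fderiv ℝ (fun p' => h x p' j) p hdir = 0) ∧
       (∀ j, h x p j = 0 → z j = 0 →
          fderiv ℝ (fun x' => h x' p j) x d
          + fderiv ℝ (fun p' => h x p' j) p hdir ≤ 0)}

/-- The objective of the sensitivity QP:
`½ dᵀ ∇²ₓₓL d + hᵀ ∇²ₚₓL d`. -/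
noncomputable def QPobj (d : Fin n → ℝ) : ℝ :=
  (1 / 2) * hessQ (fun x' => Lag f g h p x' y z) x d +
    fderiv ℝ (fun p' => fderiv ℝ (fun x'' => Lag f g h p' x'' y z) x d) p hdir

/-- The set `S_p(x;h)` of multipliers maximizing the linear functional
`(y,z) ↦ yᵀ (J_p g) h + zᵀ (J_p h) h` over `M_p(x)`. -/
def Sset : Set ((Fin me → ℝ) × (Fin mi → ℝ)) :=
  {yz ∈ MultSet f g h p x | ∀ yz' ∈ MultSet f g h p x,
    (∑ i, yz'.1 i * fderiv ℝ (fun p' => g x p' i) p hdir) +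
      (∑ j, yz'.2 j * fderiv ℝ (fun p' => h x p' j) p hdir) ≤
    (∑ i, yz.1 i * fderiv ℝ (fun p' => g x p' i) p hdir) +
      (∑ j, yz.2 j * fderiv ℝ (fun p' => h x p' j) p hdir)}

/-- A `PC¹` (piecewise continuously differentiable) function at a point. -/
def PC1At {N' : ℕ} (F : (Fin l → ℝ) → (Fin N' → ℝ)) (p : Fin l → ℝ) : Prop :=
  ∃ N ∈ 𝓝 p, ∃ k : ℕ, ∃ Fs : Fin k → (Fin l → ℝ) → (Fin N' → ℝ),
    ContinuousOn F N ∧ (∀ i, ContDiffOn ℝ 1 (Fs i) N) ∧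
    ∀ q ∈ N, ∃ i, F q = Fs i q

/-- A piecewise linear (continuous selection of finitely many linear maps) function. -/
def IsPiecewiseLinear {N' : ℕ} (D : (Fin l → ℝ) → (Fin N' → ℝ)) : Prop :=
  Continuous D ∧ ∃ k : ℕ, ∃ T : Fin k → (Fin l → ℝ) →ₗ[ℝ] (Fin N' → ℝ),
    ∀ v, ∃ i, D v = T i v


/-- The feasible set `X(q)` of NLP(q). -/
def feasSet (q : Fin l → ℝ) : Set (Fin n → ℝ) :=
  {x' | g x' q = 0 ∧ h x' q ≤ 0}

/-- The value function `φ(q)` of NLP(q). -/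
noncomputable def valFun (q : Fin l → ℝ) : ℝ :=
  sInf ((fun x' => f x' q) '' feasSet g h q)

/-- The solution set `Σ(q)` of NLP(q). -/
def solSet (q : Fin l → ℝ) : Set (Fin n → ℝ) :=
  {x' ∈ feasSet g h q | f x' q = valFun f g h q}

/-! ### Strict differentiability and local surjectivity -/

/-- Strict differentiability read along a direction `v`: from every base point `w` near `w₀`,
the increment to any `w'` with `w' = w + t v + o(t)` is `t ψ'(v) + o(t)`, uniformly in `w`.
Stated as an eventuality in the tolerance `δ` so that finitely many such facts can be combined. -/
lemma strict_step {W F : Type*} [NormedAddCommGroup W] [NormedSpace ℝ W]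
    [NormedAddCommGroup F] [NormedSpace ℝ F] {ψ : W → F} {ψ' : W →L[ℝ] F} {w₀ : W}
    (hψ : HasStrictFDerivAt ψ ψ' w₀) (v : W) {ε : ℝ} (hε : 0 < ε) :
    ∀ᶠ δ in 𝓝[>] (0 : ℝ), ∀ w, ‖w - w₀‖ < δ → ∀ t, 0 < t → t < δ → ∀ w',
      ‖w' - w - t • v‖ ≤ δ * t → ‖ψ w' - ψ w - t • ψ' v‖ ≤ ε * t := by
  have hv : 0 < ‖v‖ + 1 := by positivity
  have hp : 0 < ‖ψ'‖ + 1 := by positivity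
  have hε1 : 0 < ε / (2 * (‖v‖ + 1)) := by positivity
  have h1 := hψ.isLittleO.def hε1
  obtain ⟨r, hr, hball⟩ := Metric.eventually_nhds_iff.1 h1
  have hm : 0 < min 1 (min (r / (‖v‖ + 2)) (ε / (2 * (‖ψ'‖ + 1)))) := by positivity
  filter_upwards [Ioo_mem_nhdsGT hm] with δ hδ w hw t ht htδ w' hw'
  obtain ⟨hδ0, hδ'⟩ := hδ
  obtain ⟨hδ1, hδ''⟩ := lt_min_iff.1 hδ'
  obtain ⟨hδr, hδε⟩ := lt_min_iff.1 hδ''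
  rw [lt_div_iff₀ (by positivity)] at hδr hδε
  have hnv : ‖t • v‖ = t * ‖v‖ := by rw [norm_smul, Real.norm_of_nonneg ht.le]
  have hww : ‖w' - w‖ ≤ t * (‖v‖ + 1) := by
    have : ‖w' - w‖ ≤ ‖w' - w - t • v‖ + ‖t • v‖ := by
      simpa using norm_add_le (w' - w - t • v) (t • v)
    nlinarith
  have hw'0 : ‖w' - w₀‖ < r := by
    have : ‖w' - w₀‖ ≤ ‖w' - w‖ + ‖w - w₀‖ := by
      simpa using norm_add_le (w' - w) (w - w₀)
    nlinarith
  have hwr : ‖w - w₀‖ < r := by nlinarith [norm_nonneg v]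
  have h2 := @hball (w', w) (by
    rw [Prod.dist_eq, max_lt_iff]; simpa [dist_eq_norm] using ⟨hw'0, hwr⟩)
  simp only at h2
  have h3 : ψ w' - ψ w - t • ψ' v = (ψ w' - ψ w - ψ' (w' - w)) + ψ' (w' - w - t • v) := by
    simp only [map_sub, map_smul]; abel
  have h4 : ‖ψ' (w' - w - t • v)‖ ≤ ‖ψ'‖ * (δ * t) :=
    (ψ'.le_opNorm _).trans (by gcongr)
  have h5 : ε / (2 * (‖v‖ + 1)) * ‖w' - w‖ ≤ ε / 2 * t := by
    calc _ ≤ ε / (2 * (‖v‖ + 1)) * (t * (‖v‖ + 1)) := by gcongr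
      _ = ε / 2 * t := by field_simp
  rw [h3]
  refine (norm_add_le _ _).trans ?_
  nlinarith [norm_nonneg ψ']

/-- Quantitative local surjectivity: near a point where the strict derivative is surjective, the
image of every ball of radius `ρ` contains the ball of radius `κ * ρ`, uniformly in the centre. -/
lemma local_surj {W F : Type*} [NormedAddCommGroup W] [NormedSpace ℝ W] [CompleteSpace W]
    [NormedAddCommGroup F] [NormedSpace ℝ F] [CompleteSpace F]
    {ψ : W → F} {ψ' : W →L[ℝ] F} {w₀ : W}
    (hψ : HasStrictFDerivAt ψ ψ' w₀) (hs : Function.Surjective ψ') :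
    ∃ κ > 0, ∃ r > 0, ∀ b : W, ∀ ρ : ℝ, 0 ≤ ρ → ‖b - w₀‖ + ρ < r → ∀ y, ‖y - ψ b‖ ≤ κ * ρ →
      ∃ b', ‖b' - b‖ ≤ ρ ∧ ψ b' = y := by
  have hrange : ψ'.range = ⊤ := LinearMap.range_eq_top.2 hs
  set R := ψ'.nonlinearRightInverseOfSurjective hrange with hR
  have hRpos : 0 < R.nnnorm := ψ'.nonlinearRightInverseOfSurjective_nnnorm_pos hrange
  have hc : 0 < R.nnnorm⁻¹ / 2 := by positivity
  obtain ⟨s, hs, happ⟩ := hψ.approximates_deriv_on_nhds (Or.inr hc)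
  obtain ⟨r, hr, hrs⟩ := Metric.mem_nhds_iff.1 hs
  refine ⟨(R.nnnorm : ℝ)⁻¹ / 2, by positivity, r, hr, fun b ρ hρ hb y hy => ?_⟩
  have hsub : Metric.closedBall b ρ ⊆ s := by
    refine subset_trans (fun z hz => ?_) hrs
    rw [Metric.mem_ball]
    rw [Metric.mem_closedBall] at hz
    calc dist z w₀ ≤ dist z b + dist b w₀ := dist_triangle _ _ _
      _ < r := by rw [dist_eq_norm b w₀]; linarith
  obtain ⟨b', hb', rfl⟩ := happ.surjOn_closedBall_of_nonlinearRightInverse R hρ hsub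
    (show y ∈ _ by
      rw [Metric.mem_closedBall, dist_eq_norm]
      refine hy.trans (le_of_eq ?_)
      push_cast
      ring)
  exact ⟨b', by simpa [dist_eq_norm] using hb', rfl⟩

/-! ### Joint derivatives and the Lagrangian -/

/-- The derivative of `(x, q) ↦ φ x q` at `(x, q)`, jointly in both variables. -/
noncomputable def jointDeriv (φ : (Fin n → ℝ) → (Fin l → ℝ) → ℝ) (x : Fin n → ℝ)
    (q : Fin l → ℝ) : ((Fin n → ℝ) × (Fin l → ℝ)) →L[ℝ] ℝ :=
  fderiv ℝ (fun w : (Fin n → ℝ) × (Fin l → ℝ) => φ w.1 w.2) (x, q)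

lemma fderiv_left {φ : (Fin n → ℝ) → (Fin l → ℝ) → ℝ} {x : Fin n → ℝ} {q : Fin l → ℝ}
    (hφ : DifferentiableAt ℝ (fun w : (Fin n → ℝ) × (Fin l → ℝ) => φ w.1 w.2) (x, q))
    (d : Fin n → ℝ) : fderiv ℝ (fun x' => φ x' q) x d = jointDeriv φ x q (d, 0) := by
  have h1 := HasFDerivAt.comp (f := fun e : Fin n → ℝ => (e, q)) x hφ.hasFDerivAt
    (hasFDerivAt_prodMk_left x q)
  have h2 : HasFDerivAt (fun x' => φ x' q) _ x := h1
  rw [h2.fderiv]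
  simp [jointDeriv]

lemma fderiv_right {φ : (Fin n → ℝ) → (Fin l → ℝ) → ℝ} {x : Fin n → ℝ} {q : Fin l → ℝ}
    (hφ : DifferentiableAt ℝ (fun w : (Fin n → ℝ) × (Fin l → ℝ) => φ w.1 w.2) (x, q))
    (k : Fin l → ℝ) : fderiv ℝ (fun q' => φ x q') q k = jointDeriv φ x q (0, k) := by
  have h1 := HasFDerivAt.comp (f := fun e : Fin l → ℝ => (x, e)) q hφ.hasFDerivAt
    (hasFDerivAt_prodMk_right x q)
  have h2 : HasFDerivAt (fun q' => φ x q') _ q := h1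
  rw [h2.fderiv]
  simp [jointDeriv]

lemma jointDeriv_Lag
    (hf : Differentiable ℝ fun q : (Fin n → ℝ) × (Fin l → ℝ) => f q.1 q.2)
    (hg : ∀ i : Fin me, Differentiable ℝ fun q : (Fin n → ℝ) × (Fin l → ℝ) => g q.1 q.2 i)
    (hh : ∀ j : Fin mi, Differentiable ℝ fun q : (Fin n → ℝ) × (Fin l → ℝ) => h q.1 q.2 j) :
    HasFDerivAt (fun w : (Fin n → ℝ) × (Fin l → ℝ) => Lag f g h w.2 w.1 y z)
      (jointDeriv f x p + ∑ i, y i • jointDeriv (fun x q => g x q i) x p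
        + ∑ j, z j • jointDeriv (fun x q => h x q j) x p) (x, p) := by
  refine ((hf (x, p)).hasFDerivAt.add (HasFDerivAt.fun_sum fun i _ => ?_)).add
    (HasFDerivAt.fun_sum fun j _ => ?_)
  · exact ((hg i (x, p)).hasFDerivAt).const_mul (y i)
  · exact ((hh j (x, p)).hasFDerivAt).const_mul (z j)

lemma fderiv_Lag_x
    (hf : Differentiable ℝ fun q : (Fin n → ℝ) × (Fin l → ℝ) => f q.1 q.2)
    (hg : ∀ i : Fin me, Differentiable ℝ fun q : (Fin n → ℝ) × (Fin l → ℝ) => g q.1 q.2 i)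
    (hh : ∀ j : Fin mi, Differentiable ℝ fun q : (Fin n → ℝ) × (Fin l → ℝ) => h q.1 q.2 j)
    (d : Fin n → ℝ) :
    fderiv ℝ (fun x' => Lag f g h p x' y z) x d =
      jointDeriv f x p (d, 0) + ∑ i, y i * jointDeriv (fun x q => g x q i) x p (d, 0)
        + ∑ j, z j * jointDeriv (fun x q => h x q j) x p (d, 0) := by
  have h1 := jointDeriv_Lag f g h p x y z hf hg hh
  rw [fderiv_left (φ := fun x q => Lag f g h q x y z) h1.differentiableAt, jointDeriv, h1.fderiv]
  simp

lemma fderiv_Lag_p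
    (hf : Differentiable ℝ fun q : (Fin n → ℝ) × (Fin l → ℝ) => f q.1 q.2)
    (hg : ∀ i : Fin me, Differentiable ℝ fun q : (Fin n → ℝ) × (Fin l → ℝ) => g q.1 q.2 i)
    (hh : ∀ j : Fin mi, Differentiable ℝ fun q : (Fin n → ℝ) × (Fin l → ℝ) => h q.1 q.2 j)
    (k : Fin l → ℝ) :
    fderiv ℝ (fun p' => Lag f g h p' x y z) p k =
      jointDeriv f x p (0, k) + ∑ i, y i * jointDeriv (fun x q => g x q i) x p (0, k)
        + ∑ j, z j * jointDeriv (fun x q => h x q j) x p (0, k) := by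
  have h1 := jointDeriv_Lag f g h p x y z hf hg hh
  rw [fderiv_right (φ := fun x q => Lag f g h q x y z) h1.differentiableAt, jointDeriv, h1.fderiv]
  simp

/-! ### A theorem of the alternative -/

lemma nonneg_of_forall_pos_lt {a b C : ℝ} (H : ∀ t : ℝ, 0 < t → C < b + t * a) : 0 ≤ a := by
  by_contra! ha
  have h1 := H ((|C - b| + 1) / (-a)) (by have := abs_nonneg (C - b); apply div_pos <;> linarith)
  have h2 : (|C - b| + 1) / (-a) * a = -(|C - b| + 1) := by
    have := ha.ne
    field_simp
  rw [h2] at h1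
  linarith [neg_abs_le (C - b)]

lemma eq_zero_of_forall_lt {a b C : ℝ} (H : ∀ t : ℝ, C < b + t * a) : a = 0 := by
  refine le_antisymm ?_ (nonneg_of_forall_pos_lt fun t _ => H t)
  have := nonneg_of_forall_pos_lt (a := -a) (b := b) (C := C) fun t _ => by
    have := H (-t); linarith
  linarith

/-- Linear independence of functionals, phrased dually, gives joint surjectivity. -/
lemma surjective_of_dual {E : Type*} [AddCommGroup E] [Module ℝ E] (A : Fin me → E →ₗ[ℝ] ℝ)
    (hA : ∀ y : Fin me → ℝ, (∀ d, ∑ i, y i * A i d = 0) → y = 0) (a : Fin me → ℝ) :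
    ∃ d, ∀ i, A i d = a i := by
  have hsurj : (LinearMap.pi A).range = ⊤ := by
    by_contra hne
    obtain ⟨φ, hφ0, hφ⟩ := Submodule.exists_le_ker_of_lt_top _ (lt_top_iff_ne_top.2 hne)
    have hrep : ∀ v : Fin me → ℝ, φ v = ∑ i, φ (Pi.single i 1) * v i := fun v => by
      conv_lhs => rw [pi_eq_sum_univ' v]
      simp only [map_sum, map_smul, smul_eq_mul]
      refine Finset.sum_congr rfl fun i _ => ?_
      rw [mul_comm]
    have hz := hA (fun i => φ (Pi.single i 1)) fun d => by
      have : φ (LinearMap.pi A d) = 0 := hφ ⟨d, rfl⟩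
      rw [hrep] at this
      simpa using this
    apply hφ0
    ext i
    simpa using congrFun hz i
  obtain ⟨d, hd⟩ := LinearMap.range_eq_top.1 hsurj a
  exact ⟨d, fun i => congrFun hd i⟩

/-- Theorem of the alternative behind linear programming duality. Under the Mangasarian–Fromovitz
condition on `A`, `B` (with `act` selecting the strict inequalities in force), either the primal
system has a solution with objective value below `c`, or some multiplier has dual value at
least `c`. -/
lemma lp_alternative {E : Type*} [NormedAddCommGroup E] [NormedSpace ℝ E] [FiniteDimensional ℝ E]
    (f₀ : E →ₗ[ℝ] ℝ) (A : Fin me → E →ₗ[ℝ] ℝ) (B : Fin mi → E →ₗ[ℝ] ℝ) (act : Fin mi → Prop)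
    (hA : ∀ y : Fin me → ℝ, (∀ d, ∑ i, y i * A i d = 0) → y = 0)
    (d₀ : E) (hd₀A : ∀ i, A i d₀ = 0) (hd₀B : ∀ j, act j → B j d₀ < 0)
    (a : Fin me → ℝ) (b : Fin mi → ℝ) (c : ℝ) :
    (∃ d, (∀ i, A i d + a i = 0) ∧ (∀ j, act j → B j d + b j < 0) ∧ f₀ d < c) ∨
    ∃ (y : Fin me → ℝ) (z : Fin mi → ℝ), 0 ≤ z ∧ (∀ j, ¬ act j → z j = 0) ∧
      (∀ d, f₀ d + ∑ i, y i * A i d + ∑ j, z j * B j d = 0) ∧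
      c ≤ ∑ i, y i * a i + ∑ j, z j * b j := by
  rw [or_iff_not_imp_left]
  intro hno
  -- The attainable values, relaxed upwards by slacks `s₀ > 0` and `s j > 0` for active `j`;
  -- the slack of an inactive constraint is free, which makes its multiplier vanish.
  let T : (E × ℝ × (Fin mi → ℝ)) →ₗ[ℝ] (ℝ × (Fin mi → ℝ) × (Fin me → ℝ)) :=
    (f₀.comp (LinearMap.fst ℝ _ _) + (LinearMap.fst ℝ _ _).comp (LinearMap.snd ℝ _ _)).prod
      (((LinearMap.pi B).comp (LinearMap.fst ℝ _ _)
          + (LinearMap.snd ℝ _ _).comp (LinearMap.snd ℝ _ _)).prod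
        ((LinearMap.pi A).comp (LinearMap.fst ℝ _ _)))
  have hT : ∀ d s₀ s, T (d, s₀, s) = (f₀ d + s₀, (fun j => B j d + s j), fun i => A i d) := by
    intro d s₀ s
    rfl
  have hTs : Function.Surjective T := by
    rintro ⟨r, s, v⟩
    obtain ⟨d, hd⟩ := surjective_of_dual A hA v
    refine ⟨(d, r - f₀ d, fun j => s j - B j d), ?_⟩
    rw [hT]
    ext <;> simp [hd]
  have hTo : IsOpenMap T := T.isOpenMap_of_finiteDimensional hTs
  set O : Set (E × ℝ × (Fin mi → ℝ)) :=
    {w | 0 < w.2.1} ∩ ⋂ j, {w | act j → 0 < w.2.2 j} with hO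
  have hOo : IsOpen O := by
    refine (isOpen_lt continuous_const (by fun_prop)).inter (isOpen_iInter_of_finite fun j => ?_)
    by_cases hj : act j
    · simpa [hj] using isOpen_lt (continuous_const (y := (0 : ℝ)))
        (show Continuous fun w : E × ℝ × (Fin mi → ℝ) => w.2.2 j by fun_prop)
    · simp [hj]
  have hOc : Convex ℝ O := by
    rintro u ⟨hu1, hu2⟩ w ⟨hw1, hw2⟩ α β hα hβ hαβ
    have key : ∀ r s : ℝ, 0 < r → 0 < s → 0 < α * r + β * s := by
      intro r s hr hs
      rcases hα.eq_or_lt with h0 | h0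
      · have : β = 1 := by linarith
        subst this; rw [← h0]; linarith
      · have := mul_pos h0 hr; have := mul_nonneg hβ hs.le; linarith
    refine ⟨key _ _ hu1 hw1, mem_iInter.2 fun j hj => ?_⟩
    exact key _ _ (mem_iInter.1 hu2 j hj) (mem_iInter.1 hw2 j hj)
  have hx : ((c, (fun j => -b j), fun i => -a i) : ℝ × (Fin mi → ℝ) × (Fin me → ℝ)) ∉ T '' O := by
    rintro ⟨⟨d, s₀, s⟩, ⟨hw1, hw2⟩, hw⟩
    rw [hT] at hw
    simp only [Prod.mk.injEq, funext_iff] at hw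
    refine hno ⟨d, fun i => by linarith [hw.2.2 i], fun j hj => ?_, ?_⟩
    · have h1 : 0 < s j := mem_iInter.1 hw2 j hj
      linarith [hw.2.1 j]
    · have h1 : 0 < s₀ := hw1
      linarith [hw.1]
  obtain ⟨μ, hμ⟩ := geometric_hahn_banach_open_point (hOc.linear_image T) (hTo _ hOo) hx
  obtain ⟨lam, z, y, hrep⟩ : ∃ (lam : ℝ) (z : Fin mi → ℝ) (y : Fin me → ℝ), ∀ r s v,
      μ (r, s, v) = -(lam * r + ∑ j, z j * s j + ∑ i, y i * v i) := by
    refine ⟨-μ (1, 0, 0), fun j => -μ (0, Pi.single j 1, 0), fun i => -μ (0, 0, Pi.single i 1),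
      fun r s v => ?_⟩
    have hdec : ((r, s, v) : ℝ × (Fin mi → ℝ) × (Fin me → ℝ)) =
        r • (1, 0, 0) + ∑ j, s j • (0, Pi.single j 1, 0) + ∑ i, v i • (0, 0, Pi.single i 1) := by
      ext k
      · simp [Prod.fst_sum]
      · simp [Prod.fst_sum, Prod.snd_sum, Finset.sum_apply, Pi.single_apply]
      · simp [Prod.snd_sum, Finset.sum_apply, Pi.single_apply]
    rw [hdec]
    simp only [map_add, map_sum, map_smul, smul_eq_mul]
    simp only [neg_mul, Finset.sum_neg_distrib, mul_comm (s _), mul_comm (v _)]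
    ring
  have key : ∀ (d : E) (s₀ : ℝ) (s : Fin mi → ℝ), 0 < s₀ → (∀ j, act j → 0 < s j) →
      lam * c - ∑ j, z j * b j - ∑ i, y i * a i <
        lam * (f₀ d + s₀) + ∑ j, z j * (B j d + s j) + ∑ i, y i * A i d := by
    intro d s₀ s h1 h2
    have h3 := hμ _ ⟨(d, s₀, s), ⟨h1, mem_iInter.2 h2⟩, rfl⟩
    rw [hT, hrep, hrep] at h3
    simp only [mul_neg, Finset.sum_neg_distrib] at h3
    linarith
  set C := lam * c - ∑ j, z j * b j - ∑ i, y i * a i with hC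
  have hstat : ∀ d, lam * f₀ d + ∑ j, z j * B j d + ∑ i, y i * A i d = 0 := by
    intro d
    refine eq_zero_of_forall_lt (b := lam + ∑ j, z j) (C := C) fun t => ?_
    have h1 := key (t • d) 1 (fun _ => 1) one_pos (fun _ _ => one_pos)
    have e1 : ∑ j, z j * (B j (t • d) + 1) = t * (∑ j, z j * B j d) + ∑ j, z j := by
      rw [Finset.mul_sum, ← Finset.sum_add_distrib]
      exact Finset.sum_congr rfl fun j _ => by simp; ring
    have e2 : ∑ i, y i * A i (t • d) = t * ∑ i, y i * A i d := by
      rw [Finset.mul_sum]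
      exact Finset.sum_congr rfl fun j _ => by simp; ring
    rw [e1, e2] at h1
    simp only [map_smul, smul_eq_mul] at h1
    linarith
  have key0 : ∀ (s₀ : ℝ) (s : Fin mi → ℝ), 0 < s₀ → (∀ j, act j → 0 < s j) → C < lam * s₀ + ∑ j, z j * s j := by
    intro s₀ s h1 h2
    simpa using key 0 s₀ s h1 h2
  have hlam : 0 ≤ lam := by
    refine nonneg_of_forall_pos_lt (b := lam + ∑ j, z j) (C := C) fun t ht => ?_
    have h1 := key0 (1 + t) (fun _ => 1) (by linarith) (fun _ _ => one_pos)
    simp only [mul_one] at h1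
    linarith
  have hsingle : ∀ (j : Fin mi) (t : ℝ), ∑ k, z k * (1 + (Pi.single j t : Fin mi → ℝ) k)
      = ∑ k, z k + t * z j := by
    intro j t
    simp only [mul_add, mul_one, Finset.sum_add_distrib]
    simp [Pi.single_apply, mul_comm]
  have hz : 0 ≤ z := fun j => by
    refine nonneg_of_forall_pos_lt (b := lam + ∑ j, z j) (C := C) fun t ht => ?_
    have h1 := key0 1 (fun k => 1 + (Pi.single j t : Fin mi → ℝ) k) one_pos (fun k _ => by
      have : (0 : ℝ) ≤ (Pi.single j t : Fin mi → ℝ) k := by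
        rw [Pi.single_apply]; split_ifs <;> linarith
      linarith)
    rw [hsingle] at h1
    linarith
  have hz0 : ∀ j, ¬ act j → z j = 0 := fun j hj => by
    refine eq_zero_of_forall_lt (b := lam + ∑ j, z j) (C := C) fun t => ?_
    have h1 := key0 1 (fun k => 1 + (Pi.single j t : Fin mi → ℝ) k) one_pos (fun k hk => by
      have : k ≠ j := fun e => hj (e ▸ hk)
      simp [this])
    rw [hsingle] at h1
    linarith
  have hC0 : C ≤ 0 := by
    refine le_of_forall_pos_lt_add fun ε hε => ?_
    have hS : 0 ≤ lam + ∑ j, z j := add_nonneg hlam (Finset.sum_nonneg fun j _ => hz j)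
    have hε' : 0 < ε / (lam + ∑ j, z j + 1) := by positivity
    have h1 := key0 _ (fun _ => ε / (lam + ∑ j, z j + 1)) hε' (fun _ _ => hε')
    rw [← Finset.sum_mul] at h1
    have h2 : (lam + ∑ j, z j) * (ε / (lam + ∑ j, z j + 1)) ≤ ε := by
      rw [mul_div_assoc', div_le_iff₀ (by positivity)]
      nlinarith
    linarith
  -- A vanishing objective multiplier would contradict the Mangasarian–Fromovitz condition.
  have hlam0 : lam ≠ 0 := by
    intro h0
    have h1 := hstat d₀
    simp only [h0, hd₀A, zero_mul, mul_zero, Finset.sum_const_zero, zero_add, add_zero] at h1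
    have h2 : ∀ j ∈ Finset.univ, z j * B j d₀ ≤ 0 := fun j _ => by
      by_cases hj : act j
      · exact mul_nonpos_of_nonneg_of_nonpos (hz j) (hd₀B j hj).le
      · simp [hz0 j hj]
    have h3 : z = 0 := by
      ext j
      by_cases hj : act j
      · have := (Finset.sum_eq_zero_iff_of_nonpos h2).1 h1 j (Finset.mem_univ j)
        exact (mul_eq_zero.1 this).resolve_right (hd₀B j hj).ne
      · exact hz0 j hj
    have h4 : y = 0 := hA y fun d => by simpa [h0, h3] using hstat d
    have h5 := key0 1 (fun _ => 1) one_pos (fun _ _ => one_pos)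
    simp [hC, h0, h3, h4] at h5
  have hlp : 0 < lam := lt_of_le_of_ne hlam (Ne.symm hlam0)
  have hdiv : ∀ {m : ℕ} (u v : Fin m → ℝ), ∑ i, u i / lam * v i = (∑ i, u i * v i) / lam := by
    intro m u v
    rw [Finset.sum_div]
    exact Finset.sum_congr rfl fun i _ => by ring
  refine ⟨fun i => y i / lam, fun j => z j / lam, fun j => div_nonneg (hz j) hlam,
    fun j hj => by simp [hz0 j hj], fun d => ?_, ?_⟩
  · rw [hdiv y, hdiv z]
    have := hstat d
    field_simp
    linarith
  · rw [hdiv, hdiv, ← add_div, le_div_iff₀ hlp]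
    linarith

/-! ### Duality for the linearised problem -/

lemma MFCQ.dual
    (hg : ∀ i : Fin me, Differentiable ℝ fun q : (Fin n → ℝ) × (Fin l → ℝ) => g q.1 q.2 i)
    (hh : ∀ j : Fin mi, Differentiable ℝ fun q : (Fin n → ℝ) × (Fin l → ℝ) => h q.1 q.2 j)
    (hM : MFCQ g h p x) :
    (∀ y : Fin me → ℝ, (∀ d, ∑ i, y i * jointDeriv (fun x q => g x q i) x p (d, 0) = 0) → y = 0) ∧
    ∃ d, (∀ i, jointDeriv (fun x q => g x q i) x p (d, 0) = 0) ∧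
      ∀ j, h x p j = 0 → jointDeriv (fun x q => h x q j) x p (d, 0) < 0 := by
  have eg : ∀ i d, fderiv ℝ (fun x' => g x' p i) x d = jointDeriv (fun x q => g x q i) x p (d, 0) :=
    fun i d => fderiv_left (φ := fun x q => g x q i) (hg i (x, p)) d
  have eh : ∀ j d, fderiv ℝ (fun x' => h x' p j) x d = jointDeriv (fun x q => h x q j) x p (d, 0) :=
    fun j d => fderiv_left (φ := fun x q => h x q j) (hh j (x, p)) d
  obtain ⟨hli, d, hd1, hd2⟩ := hM
  refine ⟨fun y hy => ?_, d, fun i => eg i d ▸ hd1 i, fun j hj => eh j d ▸ hd2 j hj⟩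
  ext i
  refine Fintype.linearIndependent_iff.1 hli y ?_ i
  ext k
  simpa [gradx, eg] using hy (Pi.single k 1)

/-- Partial derivative in `x`, as a linear functional. -/
noncomputable def partialX (φ : (Fin n → ℝ) → (Fin l → ℝ) → ℝ) (x : Fin n → ℝ)
    (q : Fin l → ℝ) : (Fin n → ℝ) →ₗ[ℝ] ℝ :=
  (jointDeriv φ x q).toLinearMap.comp (LinearMap.inl ℝ _ _)

lemma jointDeriv_split (φ : (Fin n → ℝ) → (Fin l → ℝ) → ℝ) (x : Fin n → ℝ) (q : Fin l → ℝ)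
    (d : Fin n → ℝ) (k : Fin l → ℝ) :
    jointDeriv φ x q (d, k) = jointDeriv φ x q (d, 0) + jointDeriv φ x q (0, k) := by
  rw [← map_add]; simp

/-- Linear programming duality for the linearised problem at `x`: for every level `c`, either a
strictly feasible linearised direction `d` has objective slope below `c`, or some Lagrange
multiplier has `∇_p L · k ≥ c`. -/
lemma direction_or_multiplier
    (hf : Differentiable ℝ fun q : (Fin n → ℝ) × (Fin l → ℝ) => f q.1 q.2)
    (hg : ∀ i : Fin me, Differentiable ℝ fun q : (Fin n → ℝ) × (Fin l → ℝ) => g q.1 q.2 i)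
    (hh : ∀ j : Fin mi, Differentiable ℝ fun q : (Fin n → ℝ) × (Fin l → ℝ) => h q.1 q.2 j)
    (hx : x ∈ feasSet g h p) (hM : MFCQ g h p x) (k : Fin l → ℝ) (c : ℝ) :
    (∃ d, (∀ i, jointDeriv (fun x q => g x q i) x p (d, k) = 0) ∧
      (∀ j, h x p j = 0 → jointDeriv (fun x q => h x q j) x p (d, k) < 0) ∧
      jointDeriv f x p (d, k) < c) ∨
    ∃ yz ∈ MultSet f g h p x, c ≤ fderiv ℝ (fun p' => Lag f g h p' x yz.1 yz.2) p k := by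
  obtain ⟨hA, d₀, hd1, hd2⟩ := MFCQ.dual g h p x hg hh hM
  rcases lp_alternative (partialX f x p) (fun i => partialX (fun x q => g x q i) x p)
    (fun j => partialX (fun x q => h x q j) x p) (fun j => h x p j = 0) hA d₀ hd1 hd2
    (fun i => jointDeriv (fun x q => g x q i) x p (0, k))
    (fun j => jointDeriv (fun x q => h x q j) x p (0, k)) (c - jointDeriv f x p (0, k))
    with ⟨d, h1, h2, h3⟩ | ⟨y, z, hz, hz0, hst, hc⟩
  · left
    refine ⟨d, fun i => ?_, fun j hj => ?_, ?_⟩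
    · rw [jointDeriv_split]; exact h1 i
    · rw [jointDeriv_split]; exact h2 j hj
    · rw [jointDeriv_split]; exact lt_sub_iff_add_lt.1 h3
  · right
    refine ⟨(y, z), ⟨?_, hx.1, hx.2, hz, ?_⟩, ?_⟩
    · ext1 d
      rw [fderiv_Lag_x f g h p x y z hf hg hh]
      exact hst d
    · refine Finset.sum_eq_zero fun j _ => ?_
      by_cases hj : h x p j = 0
      · simp [hj]
      · simp [hz0 j hj]
    · rw [fderiv_Lag_p f g h p x y z hf hg hh]
      linarith

/-! ### Stability of the feasible set -/

/-- Directional stability of the feasible set, uniform in the base point: a strictly feasible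
linearised direction `(d, k)` at `(x, p)` can be followed from every feasible point of a nearby
problem. The equality constraints are restored by a correction that is a small fraction of `t`,
which the strict inequalities in `hdh` and `hdf` absorb. The target parameter `q'` may differ from
`q + t • k` by `δ * t`; with `k = 0` it then ranges over a whole ball around `q`. -/
lemma feasible_step
    (hf : ContDiff ℝ 2 fun q : (Fin n → ℝ) × (Fin l → ℝ) => f q.1 q.2)
    (hg : ∀ i : Fin me, ContDiff ℝ 2 fun q : (Fin n → ℝ) × (Fin l → ℝ) => g q.1 q.2 i)
    (hh : ∀ j : Fin mi, ContDiff ℝ 2 fun q : (Fin n → ℝ) × (Fin l → ℝ) => h q.1 q.2 j)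
    (hx : x ∈ feasSet g h p) (hM : MFCQ g h p x) (d : Fin n → ℝ) (k : Fin l → ℝ) (c : ℝ)
    (hdg : ∀ i, jointDeriv (fun x q => g x q i) x p (d, k) = 0)
    (hdh : ∀ j, h x p j = 0 → jointDeriv (fun x q => h x q j) x p (d, k) < 0)
    (hdf : jointDeriv f x p (d, k) < c) :
    ∃ δ > 0, ∀ x' q, ‖((x', q) : (Fin n → ℝ) × (Fin l → ℝ)) - (x, p)‖ < δ → ∀ t, 0 < t → t < δ →
      ∀ q', ‖q' - q - t • k‖ ≤ δ * t → x' ∈ feasSet g h q →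
      ∃ x'' ∈ feasSet g h q', f x'' q' ≤ f x' q + c * t := by
  have two : (2 : WithTop ℕ∞) ≠ 0 := two_ne_zero
  have hgd : ∀ i : Fin me, Differentiable ℝ fun q : (Fin n → ℝ) × (Fin l → ℝ) => g q.1 q.2 i :=
    fun i => (hg i).differentiable two
  have hhd : ∀ j : Fin mi, Differentiable ℝ fun q : (Fin n → ℝ) × (Fin l → ℝ) => h q.1 q.2 j :=
    fun j => (hh j).differentiable two
  have strict : ∀ φ : (Fin n → ℝ) → (Fin l → ℝ) → ℝ,
      (ContDiff ℝ 2 fun q : (Fin n → ℝ) × (Fin l → ℝ) => φ q.1 q.2) →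
      HasStrictFDerivAt (fun q : (Fin n → ℝ) × (Fin l → ℝ) => φ q.1 q.2)
        (jointDeriv φ x p) (x, p) :=
    fun φ hφ => hφ.contDiffAt.hasStrictFDerivAt two
  obtain ⟨hA, -⟩ := MFCQ.dual g h p x hgd hhd hM
  -- The equality constraints paired with the parameter: correcting a zero of this map keeps `q'`.
  let F : (Fin n → ℝ) × (Fin l → ℝ) → (Fin me → ℝ) × (Fin l → ℝ) := fun w => (g w.1 w.2, w.2)
  let G' : (Fin n → ℝ) × (Fin l → ℝ) →L[ℝ] (Fin me → ℝ) :=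
    ContinuousLinearMap.pi fun i => jointDeriv (fun x q => g x q i) x p
  have hG : HasStrictFDerivAt (fun w : (Fin n → ℝ) × (Fin l → ℝ) => g w.1 w.2) G' (x, p) :=
    hasStrictFDerivAt_pi.2 fun i => strict (fun x q => g x q i) (hg i)
  have hF : HasStrictFDerivAt F (G'.prod (ContinuousLinearMap.snd ℝ _ _)) (x, p) :=
    hG.prodMk hasStrictFDerivAt_snd
  have hFs : Function.Surjective (G'.prod (ContinuousLinearMap.snd ℝ (Fin n → ℝ) (Fin l → ℝ))) := by
    rintro ⟨v, k'⟩
    obtain ⟨u, hu⟩ := surjective_of_dual (fun i => partialX (fun x q => g x q i) x p) hA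
      (v - G' (0, k'))
    refine ⟨(u, k'), ?_⟩
    ext i
    · have h1 : jointDeriv (fun x q => g x q i) x p (u, 0) = v i - G' (0, k') i := hu i
      have h2 : G' (u, k') i = jointDeriv (fun x q => g x q i) x p (u, k') := rfl
      have h3 : G' (0, k') i = jointDeriv (fun x q => g x q i) x p (0, k') := rfl
      show G' (u, k') i = v i
      rw [h2, jointDeriv_split, h1, h3]; ring
    · rfl
  obtain ⟨κ, hκ, r, hr, hsurj⟩ := local_surj hF hFs
  -- First-order estimates for the objective and the inequality constraints along `(d, k)`.
  have hev1 := strict_step (strict f hf) (d, k) (sub_pos.2 hdf)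
  have hev2 : ∀ᶠ δ in 𝓝[>] (0 : ℝ), ∀ j, ∀ w, ‖w - (x, p)‖ < δ → ∀ t, 0 < t → t < δ → ∀ w',
      ‖w' - w - t • (d, k)‖ ≤ δ * t → h w.1 w.2 j ≤ 0 → h w'.1 w'.2 j ≤ 0 := by
    refine eventually_all.2 fun j => ?_
    rcases (hx.2 j).eq_or_lt with hj | hj
    · have hneg := hdh j hj
      filter_upwards [strict_step (strict (fun x q => h x q j) (hh j)) (d, k) (neg_pos.2 hneg)]
        with δ hδ w hw t ht htδ w' hw' hle
      have := hδ w hw t ht htδ w' hw'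
      rw [Real.norm_eq_abs] at this
      have := (abs_le.1 this).2
      simp only [smul_eq_mul] at this
      linarith
    · have hj' : h x p j < 0 := hj
      have hcont : ∀ᶠ w in 𝓝 (x, p), h w.1 w.2 j < 0 :=
        ((hh j).continuous.tendsto (x, p)).eventually_lt_const hj'
      obtain ⟨s, hs, hball⟩ := Metric.eventually_nhds_iff.1 hcont
      have hm : 0 < min 1 (s / (‖((d, k) : (Fin n → ℝ) × (Fin l → ℝ))‖ + 2)) := by positivity
      filter_upwards [Ioo_mem_nhdsGT hm] with δ hδ w hw t ht htδ w' hw' _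
      obtain ⟨hδ1, hδs⟩ := lt_min_iff.1 hδ.2
      rw [lt_div_iff₀ (by positivity)] at hδs
      refine (@hball w' ?_).le
      rw [dist_eq_norm]
      have e1 : w' - (x, p) = (w' - w - t • (d, k)) + t • (d, k) + (w - (x, p)) := by abel
      have e2 : ‖t • ((d, k) : (Fin n → ℝ) × (Fin l → ℝ))‖ =
          t * ‖((d, k) : (Fin n → ℝ) × (Fin l → ℝ))‖ := by
        rw [norm_smul, Real.norm_of_nonneg ht.le]
      have e3 := norm_add₃_le (a := w' - w - t • (d, k)) (b := t • (d, k)) (c := w - (x, p))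
      rw [← e1, e2] at e3
      have := norm_nonneg ((d, k) : (Fin n → ℝ) × (Fin l → ℝ))
      have h0 := hδ.1
      nlinarith
  obtain ⟨δ₁, hδ₁, hδ₁pos⟩ := ((hev1.and hev2).and self_mem_nhdsWithin).exists
  obtain ⟨hobj, hineq⟩ := hδ₁
  have hδ₁pos : 0 < δ₁ := hδ₁pos
  -- The predicted point violates the equality constraints by at most `κ (δ₁ / 2) t`.
  have hev3 := strict_step hG (d, k) (ε := κ * (δ₁ / 2)) (by positivity)
  have hm : 0 < min (δ₁ / 2)
      (r / (‖((d, k) : (Fin n → ℝ) × (Fin l → ℝ))‖ + 2 + δ₁ / 2 + δ₁)) := by positivity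
  obtain ⟨δ, ⟨hδ3, hδ⟩, hδ1⟩ :=
    ((hev3.and (Ioo_mem_nhdsGT hm)).and (Ioo_mem_nhdsGT one_pos)).exists
  obtain ⟨hδ2, hδr⟩ := lt_min_iff.1 hδ.2
  rw [lt_div_iff₀ (by positivity)] at hδr
  refine ⟨δ, hδ.1, fun x' q hw t ht htδ q' hq' hx' => ?_⟩
  set v : (Fin n → ℝ) × (Fin l → ℝ) := (d, k) with hv
  set w : (Fin n → ℝ) × (Fin l → ℝ) := (x', q) with hwdef
  set b : (Fin n → ℝ) × (Fin l → ℝ) := (x' + t • d, q') with hb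
  have hbw : ‖b - w - t • v‖ ≤ δ * t := by
    have : b - w - t • v = (0, q' - q - t • k) := by
      ext <;> simp [hb, hwdef, hv]
    rw [this]
    simpa using hq'
  have hGb : ‖g b.1 b.2‖ ≤ κ * (δ₁ / 2) * t := by
    have h1 := hδ3 w hw t ht htδ b hbw
    have h2 : g w.1 w.2 = 0 := hx'.1
    have h3 : G' v = 0 := by ext i; exact hdg i
    simpa [h2, h3] using h1
  have e2 : ‖t • v‖ = t * ‖v‖ := by rw [norm_smul, Real.norm_of_nonneg ht.le]
  have hb0 : ‖b - (x, p)‖ + δ₁ / 2 * t < r := by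
    have e1 : b - (x, p) = (b - w - t • v) + t • v + (w - (x, p)) := by abel
    have e3 := norm_add₃_le (a := b - w - t • v) (b := t • v) (c := w - (x, p))
    rw [← e1, e2] at e3
    have h0 := hδ.1
    have h1 := norm_nonneg v
    have h2 := hδ1.2
    nlinarith
  obtain ⟨b', hb', hFb'⟩ := hsurj b (δ₁ / 2 * t) (by positivity) hb0 (0, q') (by
    have : ((0, q') : (Fin me → ℝ) × (Fin l → ℝ)) - F b = (-g b.1 b.2, 0) := by
      ext <;> simp [F, hb]
    rw [this]
    simpa [mul_assoc] using hGb)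
  have hb'2 : b'.2 = q' := congrArg Prod.snd hFb'
  have hb'1 : g b'.1 b'.2 = 0 := congrArg Prod.fst hFb'
  have hb'w : ‖b' - w - t • v‖ ≤ δ₁ * t := by
    have e1 : b' - w - t • v = (b' - b) + (b - w - t • v) := by abel
    rw [e1]
    refine (norm_add_le _ _).trans ?_
    nlinarith
  have hw1 : ‖w - (x, p)‖ < δ₁ := by linarith
  have ht1 : t < δ₁ := by linarith
  refine ⟨b'.1, ⟨?_, fun j => ?_⟩, ?_⟩
  · rw [← hb'2]; exact hb'1
  · rw [← hb'2]
    exact hineq j w hw1 t ht ht1 b' hb'w (hx'.2 j)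
  · rw [← hb'2]
    have h1 := hobj w hw1 t ht ht1 b' hb'w
    rw [Real.norm_eq_abs] at h1
    have h2 := (abs_le.1 h1).2
    simp only [smul_eq_mul] at h2
    have h3 : f w.1 w.2 = f x' q := rfl
    linarith

/-! ### Compactness of the solution sets -/

lemma isCompact_feasSet
    (hg : ∀ i : Fin me, ContDiff ℝ 2 fun q : (Fin n → ℝ) × (Fin l → ℝ) => g q.1 q.2 i)
    (hh : ∀ j : Fin mi, ContDiff ℝ 2 fun q : (Fin n → ℝ) × (Fin l → ℝ) => h q.1 q.2 j)
    {N : Set (Fin l → ℝ)} (hbd : Bornology.IsBounded (⋃ q ∈ N, feasSet g h q))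
    {q : Fin l → ℝ} (hq : q ∈ N) : IsCompact (feasSet g h q) := by
  refine Metric.isCompact_of_isClosed_isBounded ?_ (hbd.subset (subset_biUnion_of_mem hq))
  have h1 : feasSet g h q = (⋂ i, {x | g x q i = 0}) ∩ ⋂ j, {x | h x q j ≤ 0} := by
    ext x
    simp [feasSet, funext_iff, Pi.le_def]
  rw [h1]
  refine (isClosed_iInter fun i => isClosed_eq ?_ continuous_const).inter
    (isClosed_iInter fun j => isClosed_le ?_ continuous_const)
  · exact (hg i).continuous.comp (by fun_prop : Continuous fun x : Fin n → ℝ => (x, q))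
  · exact (hh j).continuous.comp (by fun_prop : Continuous fun x : Fin n → ℝ => (x, q))

lemma valFun_le (hf : ContDiff ℝ 2 fun q : (Fin n → ℝ) × (Fin l → ℝ) => f q.1 q.2)
    {q : Fin l → ℝ} (hc : IsCompact (feasSet g h q)) (hx : x ∈ feasSet g h q) :
    valFun f g h q ≤ f x q := by
  have hcont : Continuous fun x : Fin n → ℝ => f x q :=
    hf.continuous.comp (by fun_prop : Continuous fun x : Fin n → ℝ => (x, q))
  exact csInf_le (hc.image hcont).bddBelow ⟨x, hx, rfl⟩

lemma solSet_nonempty (hf : ContDiff ℝ 2 fun q : (Fin n → ℝ) × (Fin l → ℝ) => f q.1 q.2)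
    {q : Fin l → ℝ} (hc : IsCompact (feasSet g h q)) (hne : (feasSet g h q).Nonempty) :
    (solSet f g h q).Nonempty := by
  have hcont : Continuous fun x : Fin n → ℝ => f x q :=
    hf.continuous.comp (by fun_prop : Continuous fun x : Fin n → ℝ => (x, q))
  obtain ⟨x, hx, hmin⟩ := (hc.image hcont).sInf_mem (hne.image _)
  exact ⟨x, hx, hmin⟩

lemma isCompact_solSet (hf : ContDiff ℝ 2 fun q : (Fin n → ℝ) × (Fin l → ℝ) => f q.1 q.2)
    {q : Fin l → ℝ} (hc : IsCompact (feasSet g h q)) : IsCompact (solSet f g h q) := by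
  have hcont : Continuous fun x : Fin n → ℝ => f x q :=
    hf.continuous.comp (by fun_prop : Continuous fun x : Fin n → ℝ => (x, q))
  exact hc.inter_right (isClosed_eq hcont continuous_const)

/-- Upper semicontinuity of the value function at `p`, from the Mangasarian–Fromovitz condition at
a single solution. -/
lemma valFun_usc
    (hf : ContDiff ℝ 2 fun q : (Fin n → ℝ) × (Fin l → ℝ) => f q.1 q.2)
    (hg : ∀ i : Fin me, ContDiff ℝ 2 fun q : (Fin n → ℝ) × (Fin l → ℝ) => g q.1 q.2 i)
    (hh : ∀ j : Fin mi, ContDiff ℝ 2 fun q : (Fin n → ℝ) × (Fin l → ℝ) => h q.1 q.2 j)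
    {N : Set (Fin l → ℝ)} (hN : N ∈ 𝓝 p)
    (hbd : Bornology.IsBounded (⋃ q ∈ N, feasSet g h q))
    (hx : x ∈ solSet f g h p) (hM : MFCQ g h p x) {c₁ : ℝ} (hc₁ : valFun f g h p < c₁) :
    ∀ᶠ q in 𝓝 p, valFun f g h q < c₁ := by
  obtain ⟨-, d, hd1, hd2⟩ := MFCQ.dual g h p x (fun i => (hg i).differentiable two_ne_zero)
    (fun j => (hh j).differentiable two_ne_zero) hM
  obtain ⟨δ, hδ, H⟩ := feasible_step f g h p x hf hg hh hx.1 hM d 0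
    (jointDeriv f x p (d, 0) + 1) hd1 hd2 (lt_add_one _)
  set c := jointDeriv f x p (d, 0) + 1
  have hlim : Tendsto (fun t : ℝ => valFun f g h p + c * t) (𝓝[>] 0) (𝓝 (valFun f g h p)) := by
    have : Tendsto (fun t : ℝ => valFun f g h p + c * t) (𝓝 0) (𝓝 (valFun f g h p + c * 0)) :=
      (by fun_prop : Continuous fun t : ℝ => valFun f g h p + c * t).tendsto 0
    rw [mul_zero, add_zero] at this
    exact this.mono_left nhdsWithin_le_nhds
  obtain ⟨t, ht1, ht2⟩ := ((hlim.eventually_lt_const hc₁).and (Ioo_mem_nhdsGT hδ)).exists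
  have hball : Metric.closedBall p (δ * t) ∈ 𝓝 p :=
    Metric.closedBall_mem_nhds _ (mul_pos hδ ht2.1)
  filter_upwards [hN, hball] with q hq hqb
  rw [Metric.mem_closedBall, dist_eq_norm] at hqb
  obtain ⟨x', hx', hle⟩ := H x p (by simpa using hδ) t ht2.1 ht2.2 q (by simpa using hqb) hx.1
  rw [hx.2] at hle
  exact ((valFun_le f g h x' hf (isCompact_feasSet g h hg hh hbd hq) hx').trans hle).trans_lt ht1

/-- Solutions of nearby problems cluster only at solutions at `p`: a property that holds for
feasible points near each solution at `p` holds for all solutions of nearby problems. -/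
lemma eventually_solSet
    (hf : ContDiff ℝ 2 fun q : (Fin n → ℝ) × (Fin l → ℝ) => f q.1 q.2)
    (hg : ∀ i : Fin me, ContDiff ℝ 2 fun q : (Fin n → ℝ) × (Fin l → ℝ) => g q.1 q.2 i)
    (hh : ∀ j : Fin mi, ContDiff ℝ 2 fun q : (Fin n → ℝ) × (Fin l → ℝ) => h q.1 q.2 j)
    {N : Set (Fin l → ℝ)} (hN : N ∈ 𝓝 p)
    (hbd : Bornology.IsBounded (⋃ q ∈ N, feasSet g h q))
    (hne : (feasSet g h p).Nonempty)
    (hmfcq : ∀ x' ∈ solSet f g h p, MFCQ g h p x')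
    {ι : Type*} {L : Filter ι} {q : ι → Fin l → ℝ} (hq : Tendsto q L (𝓝 p))
    {P : (Fin n → ℝ) → ι → Prop}
    (H : ∀ x ∈ solSet f g h p, ∀ᶠ w in 𝓝 x ×ˢ L, w.1 ∈ feasSet g h (q w.2) → P w.1 w.2) :
    ∀ᶠ i in L, ∀ x ∈ solSet f g h (q i), P x i := by
  have hpN : p ∈ N := mem_of_mem_nhds hN
  obtain ⟨R, hR⟩ := hbd.subset_closedBall 0
  have hloc : ∀ x ∈ Metric.closedBall (0 : Fin n → ℝ) R,
      {w : (Fin n → ℝ) × ι | w.1 ∈ solSet f g h (q w.2) → P w.1 w.2} ∈ 𝓝 x ×ˢ L := by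
    intro x _
    have hpair : Tendsto (fun w : (Fin n → ℝ) × ι => (w.1, q w.2)) (𝓝 x ×ˢ L) (𝓝 (x, p)) := by
      rw [nhds_prod_eq]
      exact tendsto_fst.prodMk (hq.comp tendsto_snd)
    by_cases hxs : x ∈ solSet f g h p
    · filter_upwards [H x hxs] with w hw hws using hw hws.1
    · by_cases hxf : x ∈ feasSet g h p
      · have hlt : valFun f g h p < f x p :=
          lt_of_le_of_ne (valFun_le f g h x hf (isCompact_feasSet g h hg hh hbd hpN) hxf)
            fun e => hxs ⟨hxf, e.symm⟩
        obtain ⟨m, hm1, hm2⟩ := exists_between hlt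
        obtain ⟨x₀, hx₀⟩ := solSet_nonempty f g h hf (isCompact_feasSet g h hg hh hbd hpN) hne
        have h1 := (hq.comp tendsto_snd : Tendsto (fun w : (Fin n → ℝ) × ι => q w.2)
          (𝓝 x ×ˢ L) (𝓝 p)).eventually
            (valFun_usc f g h p x₀ hf hg hh hN hbd hx₀ (hmfcq x₀ hx₀) hm1)
        have h2 := ((hf.continuous.tendsto (x, p)).comp hpair).eventually_const_lt hm2
        filter_upwards [h1, h2] with w hw1 hw2 hws
        have h3 : f w.1 (q w.2) = valFun f g h (q w.2) := hws.2
        have h4 : m < f w.1 (q w.2) := hw2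
        have h5 : valFun f g h (q w.2) < m := hw1
        linarith
      · have hcases : (∃ i, g x p i ≠ 0) ∨ ∃ j, 0 < h x p j := by
          by_contra! hcon
          exact hxf ⟨funext hcon.1, hcon.2⟩
        rcases hcases with ⟨i, hi⟩ | ⟨j, hj⟩
        · have h2 := (((hg i).continuous.tendsto (x, p)).comp hpair).eventually_ne hi
          filter_upwards [h2] with w hw hws
          exact absurd (congrFun hws.1.1 i) hw
        · have h2 := (((hh j).continuous.tendsto (x, p)).comp hpair).eventually_const_lt hj
          filter_upwards [h2] with w hw hws
          exact absurd (hws.1.2 j) (not_le.2 hw)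
  have hprod := (isCompact_closedBall (0 : Fin n → ℝ) R).mem_nhdsSet_prod_of_forall hloc
  obtain ⟨U, hU, V, hV, hUV⟩ := mem_prod_iff.1 hprod
  filter_upwards [hV, hq.eventually hN] with i hi hiN x hx
  exact hUV (mk_mem_prod (subset_of_mem_nhdsSet hU (hR (mem_biUnion hiN hx.1))) hi) hx

/-! ### Boundedness of the multipliers -/

/-- The multipliers over the whole solution set are uniformly bounded: normalising an unbounded
family would produce in the limit a nonzero multiplier for the zero objective, which the
Mangasarian–Fromovitz condition excludes. -/
lemma multiplier_bound
    (hf : ContDiff ℝ 2 fun q : (Fin n → ℝ) × (Fin l → ℝ) => f q.1 q.2)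
    (hg : ∀ i : Fin me, ContDiff ℝ 2 fun q : (Fin n → ℝ) × (Fin l → ℝ) => g q.1 q.2 i)
    (hh : ∀ j : Fin mi, ContDiff ℝ 2 fun q : (Fin n → ℝ) × (Fin l → ℝ) => h q.1 q.2 j)
    (hcS : IsCompact (solSet f g h p))
    (hmfcq : ∀ x' ∈ solSet f g h p, MFCQ g h p x') :
    ∃ R : ℝ, ∀ x ∈ solSet f g h p, ∀ yz ∈ MultSet f g h p x, ‖yz‖ ≤ R := by
  have hfd := hf.differentiable two_ne_zero
  have hgd := fun i => (hg i).differentiable two_ne_zero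
  have hhd := fun j => (hh j).differentiable two_ne_zero
  have cont : ∀ φ : (Fin n → ℝ) → (Fin l → ℝ) → ℝ,
      (ContDiff ℝ 2 fun q : (Fin n → ℝ) × (Fin l → ℝ) => φ q.1 q.2) →
      ∀ v, Continuous fun x => jointDeriv φ x p v := fun φ hφ v =>
    ((hφ.continuous_fderiv two_ne_zero).comp
      (by fun_prop : Continuous fun x : Fin n → ℝ => (x, p))).clm_apply continuous_const
  have contg := fun i => cont (fun x q => g x q i) (hg i)
  have conth := fun j => cont (fun x q => h x q j) (hh j)
  have conth0 : ∀ j, Continuous fun x => h x p j := fun j =>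
    (hh j).continuous.comp (by fun_prop : Continuous fun x : Fin n → ℝ => (x, p))
  -- The triples `(x, r, yz)` where `yz` is a Fritz John multiplier of norm one at the solution `x`
  -- and `r ∈ [0, 1]` is the weight of the objective.
  let Z : Set ((Fin n → ℝ) × ℝ × ((Fin me → ℝ) × (Fin mi → ℝ))) :=
    (solSet f g h p ×ˢ (Icc 0 1 ×ˢ Metric.sphere 0 1)) ∩
    ((⋂ d : Fin n → ℝ, {w | w.2.1 * jointDeriv f w.1 p (d, 0)
        + ∑ i, w.2.2.1 i * jointDeriv (fun x q => g x q i) w.1 p (d, 0)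
        + ∑ j, w.2.2.2 j * jointDeriv (fun x q => h x q j) w.1 p (d, 0) = 0}) ∩
      ((⋂ j, {w | 0 ≤ w.2.2.2 j}) ∩ {w | ∑ j, w.2.2.2 j * h w.1 p j = 0}))
  have hZ : IsCompact Z := by
    refine (hcS.prod (isCompact_Icc.prod (isCompact_sphere _ _))).inter_right ?_
    refine (isClosed_iInter fun d => isClosed_eq ?_ continuous_const).inter
      ((isClosed_iInter fun j => isClosed_le continuous_const (by fun_prop)).inter
        (isClosed_eq ?_ continuous_const))
    · refine ((Continuous.mul (by fun_prop) ((cont f hf _).comp continuous_fst)).add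
        (continuous_finsetSum _ fun i _ => ?_)).add (continuous_finsetSum _ fun j _ => ?_)
      · exact Continuous.mul (by fun_prop) ((contg i _).comp continuous_fst)
      · exact Continuous.mul (by fun_prop) ((conth j _).comp continuous_fst)
    · exact continuous_finsetSum _ fun j _ =>
        Continuous.mul (by fun_prop) ((conth0 j).comp continuous_fst)
  have h0 : (0 : ℝ) ∉ (fun w : (Fin n → ℝ) × ℝ × ((Fin me → ℝ) × (Fin mi → ℝ)) => w.2.1) '' Z := by
    rintro ⟨⟨x, r, y, z⟩, ⟨⟨hx, -, hyz⟩, hst, hz, hcs⟩, hr⟩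
    simp only at hr
    subst hr
    have hst' := mem_iInter.1 hst
    have hz' : ∀ j, 0 ≤ z j := fun j => mem_iInter.1 hz j
    have hcs' : ∑ j, z j * h x p j = 0 := hcs
    simp only [mem_ofPred_eq, zero_mul, zero_add] at hst'
    obtain ⟨hA, d, hd1, hd2⟩ := MFCQ.dual g h p x hgd hhd (hmfcq x hx)
    have hcs2 : ∀ j, z j * h x p j = 0 := fun j =>
      (Finset.sum_eq_zero_iff_of_nonpos fun j _ =>
        mul_nonpos_of_nonneg_of_nonpos (hz' j) (hx.1.2 j)).1 hcs' j (Finset.mem_univ j)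
    have h1 := hst' d
    simp only [hd1, mul_zero, Finset.sum_const_zero, zero_add] at h1
    have h2 : z = 0 := by
      ext j
      by_cases hj : h x p j = 0
      · have h3 := (Finset.sum_eq_zero_iff_of_nonpos fun j _ => by
          rcases mul_eq_zero.1 (hcs2 j) with h4 | h4
          · simp [h4]
          · exact mul_nonpos_of_nonneg_of_nonpos (hz' j) (hd2 j h4).le).1 h1 j (Finset.mem_univ j)
        exact (mul_eq_zero.1 h3).resolve_right (hd2 j hj).ne
      · exact (mul_eq_zero.1 (hcs2 j)).resolve_right hj
    have h3 : y = 0 := hA y fun d => by simpa [h2] using hst' d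
    simp [h2, h3] at hyz
  have hopen := (hZ.image (by fun_prop :
    Continuous fun w : (Fin n → ℝ) × ℝ × ((Fin me → ℝ) × (Fin mi → ℝ)) => w.2.1)).isClosed.isOpen_compl
  obtain ⟨ε, hε, hball⟩ := Metric.isOpen_iff.1 hopen 0 h0
  refine ⟨max 1 (1 / ε), fun x hx yz hyz => ?_⟩
  by_contra! hlt
  obtain ⟨hρ1, hρ2⟩ := max_lt_iff.1 hlt
  have hρ : 0 < ‖yz‖ := by linarith
  have hr1 : ‖yz‖⁻¹ ≤ 1 := inv_le_one_of_one_le₀ hρ1.le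
  have hr2 : ‖yz‖⁻¹ < ε := by
    rw [one_div] at hρ2
    exact inv_lt_of_inv_lt₀ hε hρ2
  obtain ⟨hk1, hk2, hk3, hk4, hk5⟩ := hyz
  have hsum : ∀ {m : ℕ} (u v : Fin m → ℝ), ∑ i, (‖yz‖⁻¹ • u) i * v i = ‖yz‖⁻¹ * ∑ i, u i * v i := by
    intro m u v
    rw [Finset.mul_sum]
    exact Finset.sum_congr rfl fun i _ => by simp; ring
  refine hball (a := ‖yz‖⁻¹) (by simpa [abs_of_pos hρ] using hr2)
    ⟨(x, ‖yz‖⁻¹, ‖yz‖⁻¹ • yz), ⟨⟨hx, ⟨by positivity, hr1⟩, ?_⟩, mem_iInter.2 fun d => ?_,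
      mem_iInter.2 fun j => ?_, ?_⟩, rfl⟩
  · simp [norm_smul, hρ.ne']
  · have h1 := congrArg (fun T : (Fin n → ℝ) →L[ℝ] ℝ => T d) hk1
    simp only [fderiv_Lag_x f g h p x yz.1 yz.2 hfd hgd hhd] at h1
    simp only [mem_ofPred_eq, Prod.smul_fst, Prod.smul_snd]
    rw [hsum, hsum, ← mul_add, ← mul_add, h1]
    simp
  · exact mul_nonneg (by positivity) (hk4 j)
  · simp only [mem_ofPred_eq, Prod.smul_snd]
    rw [hsum, hk5, mul_zero]

lemma slope_bound
    (hf : ContDiff ℝ 2 fun q : (Fin n → ℝ) × (Fin l → ℝ) => f q.1 q.2)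
    (hg : ∀ i : Fin me, ContDiff ℝ 2 fun q : (Fin n → ℝ) × (Fin l → ℝ) => g q.1 q.2 i)
    (hh : ∀ j : Fin mi, ContDiff ℝ 2 fun q : (Fin n → ℝ) × (Fin l → ℝ) => h q.1 q.2 j)
    (hcS : IsCompact (solSet f g h p))
    (hmfcq : ∀ x' ∈ solSet f g h p, MFCQ g h p x') (k : Fin l → ℝ) :
    ∃ R : ℝ, 0 ≤ R ∧ ∀ x ∈ solSet f g h p, ∀ yz ∈ MultSet f g h p x,
      |fderiv ℝ (fun p' => Lag f g h p' x yz.1 yz.2) p k| ≤ R := by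
  obtain ⟨R, hR⟩ := multiplier_bound f g h p hf hg hh hcS hmfcq
  have cont : ∀ φ : (Fin n → ℝ) → (Fin l → ℝ) → ℝ,
      (ContDiff ℝ 2 fun q : (Fin n → ℝ) × (Fin l → ℝ) => φ q.1 q.2) →
      Continuous fun x => jointDeriv φ x p (0, k) := fun φ hφ =>
    ((hφ.continuous_fderiv two_ne_zero).comp
      (by fun_prop : Continuous fun x : Fin n → ℝ => (x, p))).clm_apply continuous_const
  have hcont : Continuous fun w : (Fin n → ℝ) × ((Fin me → ℝ) × (Fin mi → ℝ)) =>
      jointDeriv f w.1 p (0, k) + ∑ i, w.2.1 i * jointDeriv (fun x q => g x q i) w.1 p (0, k)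
        + ∑ j, w.2.2 j * jointDeriv (fun x q => h x q j) w.1 p (0, k) := by
    refine (((cont f hf).comp continuous_fst).add
      (continuous_finsetSum _ fun i _ => ?_)).add (continuous_finsetSum _ fun j _ => ?_)
    · exact Continuous.mul (by fun_prop) ((cont (fun x q => g x q i) (hg i)).comp continuous_fst)
    · exact Continuous.mul (by fun_prop) ((cont (fun x q => h x q j) (hh j)).comp continuous_fst)
  obtain ⟨C, hC⟩ := (hcS.prod (isCompact_closedBall (0 : (Fin me → ℝ) × (Fin mi → ℝ)) R)
    ).exists_bound_of_continuousOn hcont.continuousOn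
  refine ⟨max C 0, le_max_right _ _, fun x hx yz hyz => ?_⟩
  rw [fderiv_Lag_p f g h p x yz.1 yz.2 (hf.differentiable two_ne_zero)
    (fun i => (hg i).differentiable two_ne_zero) (fun j => (hh j).differentiable two_ne_zero)]
  exact (hC (x, yz) ⟨hx, by simpa using hR x hx yz hyz⟩).trans (le_max_left _ _)

/-! ### Lipschitz continuity and Dini bounds -/

/-- The value function is Lipschitz near `p`: moving in the Mangasarian–Fromovitz direction for a
time proportional to `‖q' - q‖` makes a solution at `q` correctable to a feasible point at `q'`. -/
lemma valFun_lipschitz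
    (hf : ContDiff ℝ 2 fun q : (Fin n → ℝ) × (Fin l → ℝ) => f q.1 q.2)
    (hg : ∀ i : Fin me, ContDiff ℝ 2 fun q : (Fin n → ℝ) × (Fin l → ℝ) => g q.1 q.2 i)
    (hh : ∀ j : Fin mi, ContDiff ℝ 2 fun q : (Fin n → ℝ) × (Fin l → ℝ) => h q.1 q.2 j)
    {N : Set (Fin l → ℝ)} (hN : N ∈ 𝓝 p)
    (hne : ∀ q ∈ N, (feasSet g h q).Nonempty)
    (hbd : Bornology.IsBounded (⋃ q ∈ N, feasSet g h q))
    (hmfcq : ∀ x' ∈ solSet f g h p, MFCQ g h p x') :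
    ∃ K : NNReal, ∃ W ∈ 𝓝 p, LipschitzOnWith K (valFun f g h) W := by
  have hcpt := fun {q} (hq : q ∈ N) => isCompact_feasSet g h hg hh hbd hq
  -- The Lipschitz constant is a variable tending to infinity, so that the local constants
  -- need no separate patching.
  have hfst : Tendsto (fun i : ℝ × ((Fin l → ℝ) × (Fin l → ℝ)) => i.2.1)
      (atTop ×ˢ (𝓝 p ×ˢ 𝓝 p)) (𝓝 p) := tendsto_fst.comp tendsto_snd
  have hsnd : Tendsto (fun i : ℝ × ((Fin l → ℝ) × (Fin l → ℝ)) => i.2.2)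
      (atTop ×ˢ (𝓝 p ×ˢ 𝓝 p)) (𝓝 p) := tendsto_snd.comp tendsto_snd
  have hmain := eventually_solSet f g h p hf hg hh hN hbd (hne p (mem_of_mem_nhds hN)) hmfcq
    hfst (P := fun x i => valFun f g h i.2.2 ≤ f x i.2.1 + i.1 * ‖i.2.2 - i.2.1‖) (by
      intro x hx
      obtain ⟨-, d, hd1, hd2⟩ := MFCQ.dual g h p x (fun i => (hg i).differentiable two_ne_zero)
        (fun j => (hh j).differentiable two_ne_zero) (hmfcq x hx)
      obtain ⟨δ, hδ, H⟩ := feasible_step f g h p x hf hg hh hx.1 (hmfcq x hx) d 0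
        (jointDeriv f x p (d, 0) + 1) hd1 hd2 (lt_add_one _)
      set c := jointDeriv f x p (d, 0) + 1
      have hA : Tendsto (fun w : (Fin n → ℝ) × ℝ × ((Fin l → ℝ) × (Fin l → ℝ)) => (w.1, w.2.2.1))
          (𝓝 x ×ˢ (atTop ×ˢ (𝓝 p ×ˢ 𝓝 p))) (𝓝 (x, p)) := by
        rw [nhds_prod_eq]
        exact tendsto_fst.prodMk (hfst.comp tendsto_snd)
      have hB := ((hsnd.comp tendsto_snd).sub (hfst.comp tendsto_snd) :
        Tendsto (fun w : (Fin n → ℝ) × ℝ × ((Fin l → ℝ) × (Fin l → ℝ)) => w.2.2.2 - w.2.2.1)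
          (𝓝 x ×ˢ (atTop ×ˢ (𝓝 p ×ˢ 𝓝 p))) (𝓝 (p - p))).norm
      rw [sub_self, norm_zero] at hB
      have hK : Tendsto (fun w : (Fin n → ℝ) × ℝ × ((Fin l → ℝ) × (Fin l → ℝ)) => w.2.1)
          (𝓝 x ×ˢ (atTop ×ˢ (𝓝 p ×ˢ 𝓝 p))) atTop := tendsto_fst.comp tendsto_snd
      filter_upwards [hA.eventually (Metric.ball_mem_nhds _ hδ),
        hB.eventually_lt_const (mul_pos hδ hδ), hK.eventually_ge_atTop (c / δ),
        (hsnd.comp tendsto_snd).eventually hN] with ⟨x', K, q, q'⟩ h1 h2 h3 h4 hx'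
      simp only at h1 h2 h3 hx' ⊢
      have h4 : q' ∈ N := h4
      rcases eq_or_ne q' q with rfl | hqq
      · simpa using valFun_le f g h x' hf (hcpt h4) hx'
      · have hpos : 0 < ‖q' - q‖ := norm_pos_iff.2 (sub_ne_zero.2 hqq)
        obtain ⟨x'', hx'', hle⟩ := H x' q (by rwa [dist_eq_norm] at h1)
          (‖q' - q‖ / δ) (by positivity) (by rwa [div_lt_iff₀ hδ]) q'
          (by rw [smul_zero, sub_zero, mul_div_cancel₀ _ hδ.ne']) hx'
        refine (valFun_le f g h x'' hf (hcpt h4) hx'').trans (hle.trans ?_)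
        have : c * (‖q' - q‖ / δ) = c / δ * ‖q' - q‖ := by ring
        rw [this]
        gcongr)
  have hmain2 : ∀ᶠ i : ℝ × ((Fin l → ℝ) × (Fin l → ℝ)) in atTop ×ˢ (𝓝 p ×ˢ 𝓝 p),
      valFun f g h i.2.2 ≤ valFun f g h i.2.1 + i.1 * ‖i.2.2 - i.2.1‖ := by
    filter_upwards [hmain, hfst.eventually hN] with i hi hiN
    obtain ⟨x, hx⟩ := solSet_nonempty f g h hf (hcpt hiN) (hne _ hiN)
    rw [← hx.2]
    exact hi x hx
  obtain ⟨K, hK, hK0⟩ := (hmain2.curry.and (eventually_ge_atTop 0)).exists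
  obtain ⟨W, hW, hWW⟩ := mem_prod_same_iff.1 hK
  refine ⟨⟨K, hK0⟩, W, hW, LipschitzOnWith.of_le_add_mul _ fun q hq q' hq' => ?_⟩
  rw [dist_eq_norm]
  exact hWW (mk_mem_prod hq' hq)

/-- The lower bound: by compactness of the solution set, a solution at `p + t • k` can be moved
back to a feasible point at `p` at a cost of at most `-c * t`. -/
lemma eventually_le_slope
    (hf : ContDiff ℝ 2 fun q : (Fin n → ℝ) × (Fin l → ℝ) => f q.1 q.2)
    (hg : ∀ i : Fin me, ContDiff ℝ 2 fun q : (Fin n → ℝ) × (Fin l → ℝ) => g q.1 q.2 i)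
    (hh : ∀ j : Fin mi, ContDiff ℝ 2 fun q : (Fin n → ℝ) × (Fin l → ℝ) => h q.1 q.2 j)
    {N : Set (Fin l → ℝ)} (hN : N ∈ 𝓝 p)
    (hne : ∀ q ∈ N, (feasSet g h q).Nonempty)
    (hbd : Bornology.IsBounded (⋃ q ∈ N, feasSet g h q))
    (hmfcq : ∀ x' ∈ solSet f g h p, MFCQ g h p x') (k : Fin l → ℝ) {c : ℝ}
    (hc : ∀ x ∈ solSet f g h p, ∀ yz ∈ MultSet f g h p x,
      c < fderiv ℝ (fun p' => Lag f g h p' x yz.1 yz.2) p k) :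
    ∀ᶠ t in 𝓝[>] (0 : ℝ), c ≤ (valFun f g h (p + t • k) - valFun f g h p) / t := by
  have hpN := mem_of_mem_nhds hN
  have hcpt := fun {q} (hq : q ∈ N) => isCompact_feasSet g h hg hh hbd hq
  have hline : Tendsto (fun t : ℝ => p + t • k) (𝓝[>] 0) (𝓝 p) := by
    have h1 := (by fun_prop : Continuous fun t : ℝ => p + t • k).tendsto 0
    rw [zero_smul, add_zero] at h1
    exact h1.mono_left nhdsWithin_le_nhds
  have hmain := eventually_solSet f g h p hf hg hh hN hbd (hne p hpN) hmfcq hline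
    (P := fun x t => valFun f g h p ≤ f x (p + t • k) + -c * t) (by
      intro x hx
      rcases direction_or_multiplier f g h p x (hf.differentiable two_ne_zero)
        (fun i => (hg i).differentiable two_ne_zero) (fun j => (hh j).differentiable two_ne_zero)
        hx.1 (hmfcq x hx) (-k) (-c) with ⟨d, hd1, hd2, hd3⟩ | ⟨yz, hyz, hle⟩
      · obtain ⟨δ, hδ, H⟩ :=
          feasible_step f g h p x hf hg hh hx.1 (hmfcq x hx) d (-k) (-c) hd1 hd2 hd3
        have hA : Tendsto (fun w : (Fin n → ℝ) × ℝ => (w.1, p + w.2 • k))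
            (𝓝 x ×ˢ 𝓝[>] 0) (𝓝 (x, p)) := by
          rw [nhds_prod_eq]
          exact tendsto_fst.prodMk (hline.comp tendsto_snd)
        filter_upwards [hA.eventually (Metric.ball_mem_nhds _ hδ),
          tendsto_snd.eventually (Ioo_mem_nhdsGT hδ)] with ⟨x', t⟩ h1 h2 hx'
        obtain ⟨x'', hx'', hle⟩ := H x' (p + t • k) (by rwa [← dist_eq_norm]) t h2.1 h2.2 p
          (by simpa using (mul_pos hδ h2.1).le) hx'
        exact (valFun_le f g h x'' hf (hcpt hpN) hx'').trans hle
      · rw [map_neg] at hle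
        exact absurd (hc x hx yz hyz) (by linarith))
  filter_upwards [hmain, hline.eventually hN, self_mem_nhdsWithin] with t ht htN ht0
  obtain ⟨x, hx⟩ := solSet_nonempty f g h hf (hcpt htN) (hne _ htN)
  have h1 := ht x hx
  rw [hx.2] at h1
  rw [le_div_iff₀ ht0]
  linarith

/-- The upper bound: a single solution at `p` is moved to a feasible point at `p + t • k`. -/
lemma eventually_slope_le
    (hf : ContDiff ℝ 2 fun q : (Fin n → ℝ) × (Fin l → ℝ) => f q.1 q.2)
    (hg : ∀ i : Fin me, ContDiff ℝ 2 fun q : (Fin n → ℝ) × (Fin l → ℝ) => g q.1 q.2 i)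
    (hh : ∀ j : Fin mi, ContDiff ℝ 2 fun q : (Fin n → ℝ) × (Fin l → ℝ) => h q.1 q.2 j)
    {N : Set (Fin l → ℝ)} (hN : N ∈ 𝓝 p)
    (hbd : Bornology.IsBounded (⋃ q ∈ N, feasSet g h q))
    (hx : x ∈ solSet f g h p) (hM : MFCQ g h p x) (k : Fin l → ℝ) {c : ℝ}
    (hc : ∀ yz ∈ MultSet f g h p x, fderiv ℝ (fun p' => Lag f g h p' x yz.1 yz.2) p k < c) :
    ∀ᶠ t in 𝓝[>] (0 : ℝ), (valFun f g h (p + t • k) - valFun f g h p) / t ≤ c := by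
  have hline : Tendsto (fun t : ℝ => p + t • k) (𝓝[>] 0) (𝓝 p) := by
    have h1 := (by fun_prop : Continuous fun t : ℝ => p + t • k).tendsto 0
    rw [zero_smul, add_zero] at h1
    exact h1.mono_left nhdsWithin_le_nhds
  rcases direction_or_multiplier f g h p x (hf.differentiable two_ne_zero)
    (fun i => (hg i).differentiable two_ne_zero) (fun j => (hh j).differentiable two_ne_zero)
    hx.1 hM k c with ⟨d, hd1, hd2, hd3⟩ | ⟨yz, hyz, hle⟩
  · obtain ⟨δ, hδ, H⟩ := feasible_step f g h p x hf hg hh hx.1 hM d k c hd1 hd2 hd3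
    filter_upwards [hline.eventually hN, Ioo_mem_nhdsGT hδ] with t htN ht
    obtain ⟨x', hx', hle⟩ := H x p (by simpa using hδ) t ht.1 ht.2 (p + t • k)
      (by simpa using (mul_pos hδ ht.1).le) hx.1
    have h1 := (valFun_le f g h x' hf (isCompact_feasSet g h hg hh hbd htN) hx').trans hle
    rw [hx.2] at h1
    rw [div_le_iff₀ ht.1]
    linarith
  · exact absurd (hc yz hyz) (not_lt.2 hle)

/-- **Gauvin–Dubeau, Fiacco.** If the feasible-set map is
nonempty-valued and uniformly compact near `p` and MFCQ holds at every solution,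
then the value function is locally Lipschitz near `p`, and its lower and upper
Dini derivatives in any direction are squeezed between
`inf_{x ∈ Σ(p)} min_{(y,z) ∈ M_p(x)} ∇_p L ᵀ h` and
`inf_{x ∈ Σ(p)} max_{(y,z) ∈ M_p(x)} ∇_p L ᵀ h`. -/
theorem gauvin_dubeau_fiacco_dini_bounds
    (hf : ContDiff ℝ 2 fun q : (Fin n → ℝ) × (Fin l → ℝ) => f q.1 q.2)
    (hg : ∀ i : Fin me, ContDiff ℝ 2 fun q : (Fin n → ℝ) × (Fin l → ℝ) => g q.1 q.2 i)
    (hh : ∀ j : Fin mi, ContDiff ℝ 2 fun q : (Fin n → ℝ) × (Fin l → ℝ) => h q.1 q.2 j)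
    (N : Set (Fin l → ℝ)) (hN : N ∈ 𝓝 p)
    (hne : ∀ q ∈ N, (feasSet g h q).Nonempty)
    (hbd : Bornology.IsBounded (⋃ q ∈ N, feasSet g h q))
    (hmfcq : ∀ x' ∈ solSet f g h p, MFCQ g h p x') :
    -- φ is locally Lipschitz near p
    (∃ K : NNReal, ∃ W ∈ 𝓝 p, LipschitzOnWith K (valFun f g h) W) ∧
    -- the Dini derivative bounds
    ∀ hdir : Fin l → ℝ,
      (sInf ((fun x' =>
          sInf ((fun yz : (Fin me → ℝ) × (Fin mi → ℝ) =>
              fderiv ℝ (fun p' => Lag f g h p' x' yz.1 yz.2) p hdir) ''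
            MultSet f g h p x')) '' solSet f g h p)
        ≤ Filter.liminf
            (fun t : ℝ => (valFun f g h (p + t • hdir) - valFun f g h p) / t)
            (𝓝[>] (0 : ℝ))) ∧
      (Filter.liminf
          (fun t : ℝ => (valFun f g h (p + t • hdir) - valFun f g h p) / t)
          (𝓝[>] (0 : ℝ))
        ≤ Filter.limsup
            (fun t : ℝ => (valFun f g h (p + t • hdir) - valFun f g h p) / t)
            (𝓝[>] (0 : ℝ))) ∧
      (Filter.limsup
          (fun t : ℝ => (valFun f g h (p + t • hdir) - valFun f g h p) / t)
          (𝓝[>] (0 : ℝ))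
        ≤ sInf ((fun x' =>
            sSup ((fun yz : (Fin me → ℝ) × (Fin mi → ℝ) =>
                fderiv ℝ (fun p' => Lag f g h p' x' yz.1 yz.2) p hdir) ''
              MultSet f g h p x')) '' solSet f g h p)) := by
  have hpN := mem_of_mem_nhds hN
  have hcp := isCompact_feasSet g h hg hh hbd hpN
  have hcS := isCompact_solSet f g h hf hcp
  have hneS := solSet_nonempty f g h hf hcp (hne p hpN)
  refine ⟨valFun_lipschitz f g h p hf hg hh hN hne hbd hmfcq, fun hdir => ?_⟩
  obtain ⟨R, hR0, hR⟩ := slope_bound f g h p hf hg hh hcS hmfcq hdir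
  have hbelow : ∀ x' ∈ solSet f g h p, BddBelow
      ((fun yz : (Fin me → ℝ) × (Fin mi → ℝ) =>
        fderiv ℝ (fun p' => Lag f g h p' x' yz.1 yz.2) p hdir) '' MultSet f g h p x') := by
    rintro x' hx'
    refine ⟨-R, ?_⟩
    rintro _ ⟨yz, hyz, rfl⟩
    exact (abs_le.1 (hR x' hx' yz hyz)).1
  have habove : ∀ x' ∈ solSet f g h p, BddAbove
      ((fun yz : (Fin me → ℝ) × (Fin mi → ℝ) =>
        fderiv ℝ (fun p' => Lag f g h p' x' yz.1 yz.2) p hdir) '' MultSet f g h p x') := by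
    rintro x' hx'
    refine ⟨R, ?_⟩
    rintro _ ⟨yz, hyz, rfl⟩
    exact (abs_le.1 (hR x' hx' yz hyz)).2
  have hlow := fun c hc => eventually_le_slope f g h p hf hg hh hN hne hbd hmfcq hdir (c := c) hc
  have hup := fun x' hx' c hc =>
    eventually_slope_le f g h p x' hf hg hh hN hbd hx' (hmfcq x' hx') hdir (c := c) hc
  obtain ⟨x₀, hx₀⟩ := hneS
  -- The difference quotient is bounded near `0`, so `liminf` and `limsup` are not junk values.
  have hbL : IsBoundedUnder (· ≥ ·) (𝓝[>] (0 : ℝ))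
      fun t : ℝ => (valFun f g h (p + t • hdir) - valFun f g h p) / t :=
    ⟨-R - 1, eventually_map.2 (hlow _ fun x' hx' yz hyz => by
      linarith [(abs_le.1 (hR x' hx' yz hyz)).1])⟩
  have hbU : IsBoundedUnder (· ≤ ·) (𝓝[>] (0 : ℝ))
      fun t : ℝ => (valFun f g h (p + t • hdir) - valFun f g h p) / t :=
    ⟨R + 1, eventually_map.2 (hup x₀ hx₀ _ fun yz hyz => by
      linarith [(abs_le.1 (hR x₀ hx₀ yz hyz)).2])⟩
  refine ⟨le_of_forall_lt_imp_le_of_dense fun c hc => ?_, liminf_le_limsup hbU hbL,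
    le_csInf (Set.Nonempty.image _ ⟨x₀, hx₀⟩) ?_⟩
  · refine le_liminf_of_le hbU.isCoboundedUnder_ge (hlow c fun x' hx' yz hyz => ?_)
    refine (hc.trans_le (csInf_le ?_ ⟨x', hx', rfl⟩)).trans_le
      (csInf_le (hbelow x' hx') ⟨yz, hyz, rfl⟩)
    refine ⟨-R, ?_⟩
    rintro _ ⟨x'', hx'', rfl⟩
    -- `0 ≤ R` covers the convention `sInf ∅ = 0` for an empty multiplier set.
    refine Real.le_sInf ?_ (by linarith)
    rintro _ ⟨yz, hyz, rfl⟩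
    exact (abs_le.1 (hR x'' hx'' yz hyz)).1
  · rintro _ ⟨x', hx', rfl⟩
    refine le_of_forall_gt_imp_ge_of_dense fun c hc => ?_
    refine limsup_le_of_le hbL.isCoboundedUnder_le (hup x' hx' c fun yz hyz => ?_)
    exact (le_csSup (habove x' hx') ⟨yz, hyz, rfl⟩).trans_lt hc

end SensNLP
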